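/- (Liouville theorem for supersolutions of divergence-form elliptic equations in the plane) Let λ ∈ (0,1] and let A : ℝ² → (2×2 symmetric matrices) be smooth with all eigenvalues of A(x) contained in [λ, λ^{-1}] for every x. Let w : ℝ² → ℝ be a smooth function with w ≥ 0 on ℝ² and div(A(x)∇w(x)) ≤ 0 for every x ∈ ℝ². Then w is constant. -/

import Mathlib

open Real

open MeasureTheory Metric Module InnerProductSpace
open scoped Gradient RealInnerProductSpace ContDiff

/-!
Let `u > 0` satisfy `div (a ∇u) ≤ 0`. Testing this inequality against `η² / u`, for a compactly
supported `η`, and absorbing the cross term by Young's inequality gives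
`∫ η² ⟪a ∇ log u, ∇ log u⟫ ≤ 4 ∫ ⟪a ∇η, ∇η⟫ ≤ 4 Λ ∫ ‖∇η‖²`.
The Dirichlet energy is dilation invariant in the plane, so the average of `N` bump functions at
widely separated scales, whose gradients have disjoint supports, has energy of order
`N / N² = 1 / N`. Such cutoffs equal `1` on any prescribed ball, hence `∇ log u = 0`.
-/

noncomputable section

section LogarithmicCutoff

variable {E F : Type*} [NormedAddCommGroup E] [NormedSpace ℝ E]
  [NormedAddCommGroup F] [NormedSpace ℝ F]

theorem norm_sum_pow_eq_sum_norm_pow_of_pairwise {ι G : Type*} [SeminormedAddCommGroup G]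
    {s : Finset ι} {v : ι → G} {p : ℕ} (hp : p ≠ 0)
    (hv : (s : Set ι).Pairwise fun i j => v i = 0 ∨ v j = 0) :
    ‖∑ i ∈ s, v i‖ ^ p = ∑ i ∈ s, ‖v i‖ ^ p := by
  by_cases hzero : ∀ i ∈ s, v i = 0
  · rw [Finset.sum_eq_zero hzero, norm_zero, zero_pow hp]
    exact (Finset.sum_eq_zero fun i hi => by rw [hzero i hi, norm_zero, zero_pow hp]).symm
  · push Not at hzero
    obtain ⟨i, hi, hvi⟩ := hzero
    have hother : ∀ j ∈ s, j ≠ i → v j = 0 := fun j hj hji => (hv hj hi hji).resolve_right hvi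
    rw [Finset.sum_eq_single_of_mem i hi hother, Finset.sum_eq_single_of_mem i hi]
    intro j hj hji
    rw [hother j hj hji, norm_zero, zero_pow hp]

theorem integrable_norm_fderiv_pow [MeasurableSpace E] [BorelSpace E] {μ : Measure E}
    [IsFiniteMeasureOnCompacts μ] {f : E → F} (hf : ContDiff ℝ 1 f) (hfc : HasCompactSupport f)
    {p : ℕ} (hp : p ≠ 0) : Integrable (fun x => ‖fderiv ℝ f x‖ ^ p) μ :=
  ((hf.continuous_fderiv one_ne_zero).norm.pow p).integrable_of_hasCompactSupport
    ((hfc.fderiv (𝕜 := ℝ)).comp_left (g := fun T => ‖T‖ ^ p) (by simp [hp]))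

theorem integral_norm_fderiv_comp_smul_pow_finrank [FiniteDimensional ℝ E] [MeasurableSpace E]
    [BorelSpace E] (μ : Measure E) [μ.IsAddHaarMeasure] (f : E → F) {c : ℝ} (hc : c ≠ 0) :
    ∫ x, ‖fderiv ℝ (fun y => f (c • y)) x‖ ^ finrank ℝ E ∂μ =
      ∫ x, ‖fderiv ℝ f x‖ ^ finrank ℝ E ∂μ := by
  have hpow : |c| ^ finrank ℝ E ≠ 0 := pow_ne_zero _ (abs_ne_zero.2 hc)
  simp_rw [fderiv_comp_smul, norm_smul, mul_pow, Real.norm_eq_abs]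
  rw [integral_const_mul, Measure.integral_comp_smul μ (fun x => ‖fderiv ℝ f x‖ ^ finrank ℝ E),
    smul_eq_mul, abs_inv, abs_pow, mul_inv_cancel_left₀ hpow]

variable {r : ℝ}

variable (E) in
/-- The bump function at scale `3 ^ k * r`: it is `1` up to that radius and `0` from twice that
radius on. The fixed ratio of the radii makes the bumps dilates of each other, and the factor `3`
between consecutive scales makes the supports of their derivatives disjoint. -/
def scaleBump (hr : 0 < r) (k : ℕ) : ContDiffBump (0 : E) where
  rIn := 3 ^ k * r
  rOut := 2 * (3 ^ k * r)
  rIn_pos := by positivity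
  rIn_lt_rOut := lt_two_mul_self (by positivity)

section

variable [HasContDiffBump E] (hr : 0 < r)

theorem scaleBump_apply_eq_comp_smul (k : ℕ) (x : E) :
    scaleBump E hr k x = scaleBump E hr 0 (((3 : ℝ) ^ k)⁻¹ • x) := by
  have hk : (3 : ℝ) ^ k ≠ 0 := by positivity
  simp [ContDiffBump.apply, scaleBump, smul_smul, hk, hr.ne', mul_comm]

theorem norm_mem_Icc_of_fderiv_scaleBump_ne_zero {k : ℕ} {x : E}
    (hx : fderiv ℝ (scaleBump E hr k) x ≠ 0) : ‖x‖ ∈ Set.Icc (3 ^ k * r) (2 * (3 ^ k * r)) := by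
  refine ⟨?_, ?_⟩ <;> by_contra! hlt <;> apply hx
  · have hone : scaleBump E hr k =ᶠ[nhds x] 1 :=
      (scaleBump E hr k).eventuallyEq_one_of_mem_ball (by simpa [scaleBump] using hlt)
    simp [hone.fderiv_eq]
  · have hout : x ∉ tsupport (scaleBump E hr k) := by
      rw [(scaleBump E hr k).tsupport_eq]
      simpa [scaleBump] using hlt
    exact image_eq_zero_of_notMem_tsupport fun h => hout (tsupport_fderiv_subset ℝ h)

theorem pairwise_fderiv_scaleBump_eq_zero (x : E) : Pairwise fun j k : ℕ =>
    fderiv ℝ (scaleBump E hr j) x = 0 ∨ fderiv ℝ (scaleBump E hr k) x = 0 := by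
  intro j k hne
  wlog hjk : j < k generalizing j k
  · exact (this hne.symm (hne.lt_or_gt.resolve_left hjk)).symm
  by_contra! ⟨hj, hk⟩
  have hle := (norm_mem_Icc_of_fderiv_scaleBump_ne_zero hr hj).2
  have hge := (norm_mem_Icc_of_fderiv_scaleBump_ne_zero hr hk).1
  have hscale : (3 : ℝ) ^ (j + 1) * r ≤ 3 ^ k * r := by
    gcongr
    · norm_num
    · exact hjk
  have hpos : 0 < 3 ^ j * r := by positivity
  rw [pow_succ] at hscale
  linarith

end

variable [FiniteDimensional ℝ E] (hr : 0 < r) (N : ℕ)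

theorem integral_norm_fderiv_scaleBump_pow_finrank [MeasurableSpace E] [BorelSpace E]
    (μ : Measure E) [μ.IsAddHaarMeasure] (k : ℕ) :
    ∫ x, ‖fderiv ℝ (scaleBump E hr k) x‖ ^ finrank ℝ E ∂μ =
      ∫ x, ‖fderiv ℝ (scaleBump E hr 0) x‖ ^ finrank ℝ E ∂μ := by
  rw [funext (scaleBump_apply_eq_comp_smul hr k)]
  exact integral_norm_fderiv_comp_smul_pow_finrank μ _ (by positivity)

variable (E) in
/-- The average of the first `N` bump functions `scaleBump E hr k`: a smooth substitute for the
cutoff that decreases linearly in `log ‖x‖` from `1` to `0`. -/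
def logCutoff : E → ℝ :=
  (N : ℝ)⁻¹ • ∑ k ∈ Finset.range N, (scaleBump E hr k : E → ℝ)

theorem contDiff_logCutoff {n : ℕ∞} : ContDiff ℝ n (logCutoff E hr N) := by
  have hsum : ContDiff ℝ n fun x => ∑ k ∈ Finset.range N, scaleBump E hr k x :=
    ContDiff.sum fun k _ => (scaleBump E hr k).contDiff
  simpa only [logCutoff, Finset.sum_fn] using! hsum.const_smul (N : ℝ)⁻¹

theorem hasCompactSupport_logCutoff : HasCompactSupport (logCutoff E hr N) :=
  HasCompactSupport.smul_left (f := fun _ => (N : ℝ)⁻¹) <|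
    Finset.sum_induction _ HasCompactSupport (fun _ _ => HasCompactSupport.add)
      HasCompactSupport.zero fun k _ => (scaleBump E hr k).hasCompactSupport

theorem logCutoff_eq_one {N : ℕ} (hN : N ≠ 0) {x : E} (hx : x ∈ closedBall 0 r) :
    logCutoff E hr N x = 1 := by
  have hbump (k : ℕ) : scaleBump E hr k x = 1 :=
    (scaleBump E hr k).one_of_mem_closedBall <| closedBall_subset_closedBall
      (le_mul_of_one_le_left hr.le (one_le_pow₀ (by norm_num))) hx
  simp [logCutoff, hbump, hN]

theorem fderiv_logCutoff (x : E) : fderiv ℝ (logCutoff E hr N) x =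
    (N : ℝ)⁻¹ • ∑ k ∈ Finset.range N, fderiv ℝ (scaleBump E hr k) x := by
  have hdiff (k : ℕ) : DifferentiableAt ℝ (scaleBump E hr k) x :=
    (scaleBump E hr k).contDiff.differentiable one_ne_zero x
  rw [logCutoff, fderiv_const_smul (DifferentiableAt.sum fun k _ => hdiff k),
    fderiv_sum fun k _ => hdiff k]

variable [MeasurableSpace E] [BorelSpace E] (μ : Measure E) [μ.IsAddHaarMeasure]

theorem integral_norm_fderiv_logCutoff_pow_finrank (hE : finrank ℝ E ≠ 0) :
    ∫ x, ‖fderiv ℝ (logCutoff E hr N) x‖ ^ finrank ℝ E ∂μ =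
      (N : ℝ)⁻¹ ^ finrank ℝ E *
        (N * ∫ x, ‖fderiv ℝ (scaleBump E hr 0) x‖ ^ finrank ℝ E ∂μ) := by
  have hsplit (x : E) : ‖fderiv ℝ (logCutoff E hr N) x‖ ^ finrank ℝ E =
      (N : ℝ)⁻¹ ^ finrank ℝ E *
        ∑ k ∈ Finset.range N, ‖fderiv ℝ (scaleBump E hr k) x‖ ^ finrank ℝ E := by
    rw [fderiv_logCutoff, norm_smul, mul_pow, norm_inv, RCLike.norm_natCast,
      norm_sum_pow_eq_sum_norm_pow_of_pairwise hE
        ((pairwise_fderiv_scaleBump_eq_zero hr x).set_pairwise _)]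
  have hint (k : ℕ) : Integrable (fun x => ‖fderiv ℝ (scaleBump E hr k) x‖ ^ finrank ℝ E) μ :=
    integrable_norm_fderiv_pow (scaleBump E hr k).contDiff (scaleBump E hr k).hasCompactSupport hE
  simp_rw [hsplit]
  rw [integral_const_mul, integral_finsetSum _ fun k _ => hint k]
  simp_rw [integral_norm_fderiv_scaleBump_pow_finrank, Finset.sum_const, Finset.card_range,
    nsmul_eq_mul]

theorem exists_cutoff_integral_norm_fderiv_pow_finrank_le (hE : 2 ≤ finrank ℝ E) (R : ℝ) {ε : ℝ}
    (hε : 0 < ε) : ∃ η : E → ℝ, ContDiff ℝ ∞ η ∧ HasCompactSupport η ∧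
      Set.EqOn η 1 (closedBall 0 R) ∧ ∫ x, ‖fderiv ℝ η x‖ ^ finrank ℝ E ∂μ ≤ ε := by
  have hr : 0 < max R 1 := lt_max_of_lt_right one_pos
  set C := ∫ x, ‖fderiv ℝ (scaleBump E hr 0) x‖ ^ finrank ℝ E ∂μ
  have hC : 0 ≤ C := integral_nonneg fun x => by positivity
  obtain ⟨N, hN⟩ := exists_nat_gt (C / ε)
  have hNpos : (0 : ℝ) < N := (div_nonneg hC hε.le).trans_lt hN
  have hNinv : (N : ℝ)⁻¹ ≤ 1 := inv_le_one_of_one_le₀ (by exact_mod_cast hNpos)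
  refine ⟨logCutoff E hr N, contDiff_logCutoff hr N, hasCompactSupport_logCutoff hr N,
    fun x hx => logCutoff_eq_one hr (by exact_mod_cast hNpos.ne')
      (closedBall_subset_closedBall (le_max_left R 1) hx), ?_⟩
  calc ∫ x, ‖fderiv ℝ (logCutoff E hr N) x‖ ^ finrank ℝ E ∂μ
    _ = (N : ℝ)⁻¹ ^ finrank ℝ E * (N * C) :=
        integral_norm_fderiv_logCutoff_pow_finrank hr N μ (by lia)
    _ ≤ (N : ℝ)⁻¹ ^ 2 * (N * C) :=
        mul_le_mul_of_nonneg_right (pow_le_pow_of_le_one (by positivity) hNinv hE) (by positivity)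
    _ = C / N := by field_simp
    _ ≤ ε := by
        rw [div_le_iff₀ hNpos, ← div_le_iff₀' hε]
        exact hN.le

end LogarithmicCutoff

section Divergence

variable {E : Type*} [NormedAddCommGroup E] [NormedSpace ℝ E] {X : E → E}

/-- The divergence of a vector field, defined without coordinates as the trace of its derivative. -/
def divergence (X : E → E) (x : E) : ℝ :=
  LinearMap.trace ℝ E (fderiv ℝ X x)

theorem divergence_eq_sum_fderiv_apply_single {ι : Type*} [Fintype ι] [DecidableEq ι]
    {X : EuclideanSpace ℝ ι → EuclideanSpace ℝ ι} {x : EuclideanSpace ℝ ι}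
    (hX : DifferentiableAt ℝ X x) :
    divergence X x = ∑ i, fderiv ℝ (fun y => X y i) x (EuclideanSpace.single i 1) := by
  have hcoord (i : ι) (v : EuclideanSpace ℝ ι) :
      fderiv ℝ (fun y => X y i) x v = fderiv ℝ X x v i := by
    have hcomp := (EuclideanSpace.proj (𝕜 := ℝ) i).hasFDerivAt.comp x hX.hasFDerivAt
    exact DFunLike.congr_fun hcomp.fderiv v
  simp [divergence, LinearMap.trace_eq_sum_inner _ (EuclideanSpace.basisFun ι ℝ), hcoord,
    EuclideanSpace.inner_single_left]

theorem integrable_fderiv {F : Type*} [NormedAddCommGroup F] [NormedSpace ℝ F]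
    [MeasurableSpace E] [BorelSpace E] (μ : Measure E) [IsFiniteMeasureOnCompacts μ] {f : E → F}
    (hf : ContDiff ℝ 1 f) (hfc : HasCompactSupport f) : Integrable (fderiv ℝ f) μ :=
  (hf.continuous_fderiv one_ne_zero).integrable_of_hasCompactSupport (hfc.fderiv (𝕜 := ℝ))

variable [FiniteDimensional ℝ E]

theorem divergence_smul {f : E → ℝ} {x : E} (hf : DifferentiableAt ℝ f x)
    (hX : DifferentiableAt ℝ X x) :
    divergence (fun y => f y • X y) x = f x * divergence X x + fderiv ℝ f x (X x) := by
  simp [divergence, fderiv_fun_smul hf hX]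

variable [MeasurableSpace E] [BorelSpace E] (μ : Measure E) [μ.IsAddHaarMeasure]

theorem integral_fderiv_eq_zero {F : Type*} [NormedAddCommGroup F] [NormedSpace ℝ F]
    {f : E → F} (hf : ContDiff ℝ 1 f) (hfc : HasCompactSupport f) :
    ∫ x, fderiv ℝ f x ∂μ = 0 := by
  have hint : Integrable (fderiv ℝ f) μ := integrable_fderiv μ hf hfc
  ext v
  have hparts := integral_smul_fderiv_eq_neg_fderiv_smul_of_integrable (μ := μ)
    (f := fun _ : E => (1 : ℝ)) (g := f) (v := v) (by simp)
    (by simpa using hint.apply_continuousLinearMap v)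
    (by simpa using hf.continuous.integrable_of_hasCompactSupport hfc)
    (fun _ _ => differentiableAt_const _) (fun _ _ => hf.differentiable one_ne_zero _)
  simpa [ContinuousLinearMap.integral_apply hint] using hparts

variable (E) in
/-- The trace as a continuous linear functional on continuous endomorphisms, in the form in which
it commutes with the Bochner integral. -/
def traceCLM : (E →L[ℝ] E) →L[ℝ] ℝ :=
  (LinearMap.trace ℝ E ∘ₗ ContinuousLinearMap.coeLM ℝ).toContinuousLinearMap

theorem integrable_divergence (hX : ContDiff ℝ 1 X) (hXc : HasCompactSupport X) :
    Integrable (divergence X) μ :=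
  (traceCLM E).integrable_comp (integrable_fderiv μ hX hXc)

theorem integral_divergence_eq_zero (hX : ContDiff ℝ 1 X) (hXc : HasCompactSupport X) :
    ∫ x, divergence X x ∂μ = 0 :=
  calc ∫ x, divergence X x ∂μ
    _ = traceCLM E (∫ x, fderiv ℝ X x ∂μ) :=
        (traceCLM E).integral_comp_comm (integrable_fderiv μ hX hXc)
    _ = 0 := by rw [integral_fderiv_eq_zero μ hX hXc, map_zero]

end Divergence

section Caccioppoli

theorem hasFDerivAt_sq_div {E : Type*} [NormedAddCommGroup E] [NormedSpace ℝ E] {η u : E → ℝ}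
    {x : E} {dη du : E →L[ℝ] ℝ} (hη : HasFDerivAt η dη x) (hu : HasFDerivAt u du x)
    (hux : u x ≠ 0) :
    HasFDerivAt (fun y => η y ^ 2 / u y)
      ((2 * (η x / u x)) • dη - (η x / u x) ^ 2 • du) x := by
  have hinv : HasFDerivAt (fun y => (u y)⁻¹) (-(u x ^ 2)⁻¹ • du) x :=
    (hasDerivAt_inv hux).comp_hasFDerivAt x hu
  refine ((hη.pow 2).mul hinv).congr_fderiv ?_
  ext v
  simp only [Nat.add_one_sub_one, pow_one, nsmul_eq_mul, Nat.cast_ofNat, add_apply, smul_apply,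
    smul_eq_mul, neg_mul, mul_neg, sub_apply]
  field_simp
  ring

variable {E : Type*} [NormedAddCommGroup E] [InnerProductSpace ℝ E]

theorem two_mul_inner_map_le_of_isPositive {T : E →L[ℝ] E} (hT : T.IsPositive) {t : ℝ} (ht : 0 < t)
    (v w : E) : 2 * ⟪T v, w⟫ ≤ t * ⟪T v, v⟫ + t⁻¹ * ⟪T w, w⟫ := by
  have hnonneg : 0 ≤ t⁻¹ * ⟪T (t • v - w), t • v - w⟫ :=
    mul_nonneg (inv_nonneg.2 ht.le) (hT.inner_nonneg_left _)
  have hsymm : ⟪T w, v⟫ = ⟪T v, w⟫ := by rw [hT.isSymmetric.apply_clm, real_inner_comm]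
  have hexpand : t⁻¹ * ⟪T (t • v - w), t • v - w⟫ =
      t * ⟪T v, v⟫ + t⁻¹ * ⟪T w, w⟫ - 2 * ⟪T v, w⟫ := by
    simp only [map_sub, map_smul, inner_sub_left, inner_sub_right, real_inner_smul_left,
      real_inner_smul_right, hsymm]
    field_simp
    ring
  linarith

theorem norm_gradient [CompleteSpace E] (u : E → ℝ) (x : E) : ‖∇ u x‖ = ‖fderiv ℝ u x‖ :=
  LinearIsometryEquiv.norm_map _ _

theorem hasCompactSupport_gradient [CompleteSpace E] {η : E → ℝ} (hη : HasCompactSupport η) :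
    HasCompactSupport (∇ η) :=
  (hη.fderiv (𝕜 := ℝ)).comp_left (map_zero (toDual ℝ E).symm)

variable [FiniteDimensional ℝ E] {a : E → E →L[ℝ] E} {u η : E → ℝ}

theorem contDiff_gradient {n : WithTop ℕ∞} (hu : ContDiff ℝ (n + 1) u) : ContDiff ℝ n (∇ u) := by
  have hrepr : ∇ u = fun x => ∑ i, fderiv ℝ u x (stdOrthonormalBasis ℝ E i) •
      stdOrthonormalBasis ℝ E i := by
    ext1 x
    simpa using ((stdOrthonormalBasis ℝ E).sum_repr' (∇ u x)).symm
  have hderiv : ContDiff ℝ n (fderiv ℝ u) := hu.fderiv_right le_rfl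
  rw [hrepr]
  exact ContDiff.sum fun i _ => (hderiv.clm_apply contDiff_const).smul contDiff_const

theorem continuous_gradient (hu : ContDiff ℝ 1 u) : Continuous (∇ u) :=
  (contDiff_gradient (n := 0) (by simpa using hu)).continuous

/-- The flux `a ∇u` of `u`, so that `divergence (flux a u)` is the divergence-form operator
`div (a ∇u)`. -/
def flux (a : E → E →L[ℝ] E) (u : E → ℝ) (x : E) : E :=
  a x (∇ u x)

theorem contDiff_flux {n : WithTop ℕ∞} (ha : ContDiff ℝ n a) (hu : ContDiff ℝ (n + 1) u) :
    ContDiff ℝ n (flux a u) :=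
  ha.clm_apply (contDiff_gradient hu)

/-- The energy density `⟪a ∇ log u, ∇ log u⟫` of the logarithm of a positive function `u`. -/
def logEnergy (a : E → E →L[ℝ] E) (u : E → ℝ) (x : E) : ℝ :=
  ⟪flux a u x, ∇ u x⟫ / u x ^ 2

theorem continuous_logEnergy (ha : Continuous a) (hu : ContDiff ℝ 1 u) (hu0 : ∀ x, u x ≠ 0) :
    Continuous (logEnergy a u) :=
  ((ha.clm_apply (continuous_gradient hu)).inner (continuous_gradient hu)).div
    (hu.continuous.pow 2) fun x => pow_ne_zero 2 (hu0 x)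

theorem logEnergy_nonneg {x : E} (ha : (a x).IsPositive) : 0 ≤ logEnergy a u x :=
  div_nonneg (ha.inner_nonneg_left _) (sq_nonneg _)

theorem divergence_sq_div_smul_flux_le {x : E} (hη : DifferentiableAt ℝ η x)
    (hu : DifferentiableAt ℝ u x) (hux : 0 < u x) (hflux : DifferentiableAt ℝ (flux a u) x)
    (ha : (a x).IsPositive) (hsuper : divergence (flux a u) x ≤ 0) :
    divergence (fun y => (η y ^ 2 / u y) • flux a u y) x ≤
      2 * ⟪flux a η x, ∇ η x⟫ - 1 / 2 * (η x ^ 2 * logEnergy a u x) := by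
  have hderiv := hasFDerivAt_sq_div hη.hasFDerivAt hu.hasFDerivAt hux.ne'
  have hyoung := two_mul_inner_map_le_of_isPositive ha one_half_pos ((η x / u x) • ∇ u x) (∇ η x)
  have hweight : η x ^ 2 / u x * divergence (flux a u) x ≤ 0 :=
    mul_nonpos_of_nonneg_of_nonpos (by positivity) hsuper
  have hinner (f : E → ℝ) : fderiv ℝ f x (flux a u x) = ⟪flux a u x, ∇ f x⟫ := by
    rw [← inner_gradient_left, real_inner_comm]
  rw [divergence_smul hderiv.differentiableAt hflux, hderiv.fderiv]
  simp only [map_smul, real_inner_smul_left, real_inner_smul_right, ← flux.eq_def] at hyoung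
  simp only [sub_apply, smul_apply, smul_eq_mul, hinner, logEnergy]
  linear_combination hyoung + hweight

variable [MeasurableSpace E] [BorelSpace E] (μ : Measure E)

theorem integrable_inner_flux_gradient [IsFiniteMeasureOnCompacts μ] (ha : Continuous a)
    (hη : ContDiff ℝ 1 η) (hηc : HasCompactSupport η) :
    Integrable (fun x => ⟪flux a η x, ∇ η x⟫) μ := by
  have hcont : Continuous (∇ η) := continuous_gradient hη
  refine ((ha.clm_apply hcont).inner hcont).integrable_of_hasCompactSupport ?_
  exact (hasCompactSupport_gradient hηc).mono fun x hx h0 => hx (by simp [flux, h0])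

theorem integrable_sq_mul_logEnergy [IsFiniteMeasureOnCompacts μ] (ha : Continuous a)
    (hu : ContDiff ℝ 1 u) (hu0 : ∀ x, u x ≠ 0) (hη : Continuous η) (hηc : HasCompactSupport η) :
    Integrable (fun x => η x ^ 2 * logEnergy a u x) μ :=
  ((hη.pow 2).mul (continuous_logEnergy ha hu hu0)).integrable_of_hasCompactSupport
    (hηc.mono fun x hx h0 => hx (by simp [h0]))

theorem integral_sq_mul_logEnergy_le [μ.IsAddHaarMeasure] (ha : ContDiff ℝ 1 a)
    (hapos : ∀ x, (a x).IsPositive) (hu : ContDiff ℝ 2 u) (hupos : ∀ x, 0 < u x)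
    (hsuper : ∀ x, divergence (flux a u) x ≤ 0)
    (hη : ContDiff ℝ 1 η) (hηc : HasCompactSupport η) :
    ∫ x, η x ^ 2 * logEnergy a u x ∂μ ≤ 4 * ∫ x, ⟪flux a η x, ∇ η x⟫ ∂μ := by
  have hu1 : ContDiff ℝ 1 u := hu.of_le one_le_two
  have hflux : ContDiff ℝ 1 (flux a u) := contDiff_flux ha (by rwa [one_add_one_eq_two])
  set X : E → E := fun y => (η y ^ 2 / u y) • flux a u y
  have hX : ContDiff ℝ 1 X := ((hη.pow 2).div hu1 fun x => (hupos x).ne').smul hflux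
  have hXc : HasCompactSupport X := hηc.mono fun x hx h0 => hx (by simp [X, h0])
  have henergyη := (integrable_inner_flux_gradient μ ha.continuous hη hηc).const_mul 2
  have henergyu := (integrable_sq_mul_logEnergy μ ha.continuous hu1 (fun x => (hupos x).ne')
    hη.continuous hηc).const_mul (1 / 2)
  have hmono : ∫ x, divergence X x ∂μ ≤
      ∫ x, (2 * ⟪flux a η x, ∇ η x⟫ - 1 / 2 * (η x ^ 2 * logEnergy a u x)) ∂μ :=
    integral_mono (integrable_divergence μ hX hXc) (henergyη.sub henergyu) fun x =>
      divergence_sq_div_smul_flux_le (hη.differentiable one_ne_zero x)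
        (hu1.differentiable one_ne_zero x) (hupos x) (hflux.differentiable one_ne_zero x)
        (hapos x) (hsuper x)
  rw [integral_divergence_eq_zero μ hX hXc, integral_sub henergyη henergyu, integral_const_mul,
    integral_const_mul] at hmono
  linarith

theorem integral_inner_flux_gradient_le [IsFiniteMeasureOnCompacts μ] (ha : Continuous a) {Λ : ℝ}
    (hΛ : ∀ x v, ⟪a x v, v⟫ ≤ Λ * ‖v‖ ^ 2) (hη : ContDiff ℝ 1 η) (hηc : HasCompactSupport η) :
    ∫ x, ⟪flux a η x, ∇ η x⟫ ∂μ ≤ Λ * ∫ x, ‖fderiv ℝ η x‖ ^ 2 ∂μ := by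
  rw [← integral_const_mul]
  refine integral_mono (integrable_inner_flux_gradient μ ha hη hηc)
    ((integrable_norm_fderiv_pow hη hηc two_ne_zero).const_mul Λ) fun x => ?_
  simpa only [flux, norm_gradient] using hΛ x (∇ η x)

end Caccioppoli

section Liouville

theorem eq_zero_of_forall_setIntegral_ball_nonpos {E : Type*} [NormedAddCommGroup E]
    [ProperSpace E] [MeasurableSpace E] [BorelSpace E] (μ : Measure E) [μ.IsOpenPosMeasure]
    [IsFiniteMeasureOnCompacts μ] {f : E → ℝ} (hf : Continuous f) (hf0 : ∀ x, 0 ≤ f x)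
    (hint : ∀ R, ∫ x in ball 0 R, f x ∂μ ≤ 0) (x : E) : f x = 0 := by
  have hball : x ∈ ball 0 (‖x‖ + 1) := by simp
  have hfi : IntegrableOn f (ball 0 (‖x‖ + 1)) μ :=
    (hf.continuousOn.integrableOn_compact (isCompact_closedBall 0 _)).mono_set
      ball_subset_closedBall
  have hae : f =ᵐ[μ.restrict (ball 0 (‖x‖ + 1))] 0 :=
    (setIntegral_eq_zero_iff_of_nonneg_ae (.of_forall hf0) hfi).1
      ((hint _).antisymm (integral_nonneg hf0))
  exact Measure.eqOn_open_of_ae_eq hae isOpen_ball hf.continuousOn continuousOn_const hball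

variable {E : Type*} [NormedAddCommGroup E] [InnerProductSpace ℝ E] [FiniteDimensional ℝ E]
  {a : E → E →L[ℝ] E} {Λ : ℝ}

theorem setIntegral_ball_logEnergy_le [MeasurableSpace E] [BorelSpace E] (μ : Measure E)
    [μ.IsAddHaarMeasure] (ha : ContDiff ℝ 1 a) (hapos : ∀ x, (a x).IsPositive)
    (hΛ : ∀ x v, ⟪a x v, v⟫ ≤ Λ * ‖v‖ ^ 2) {u : E → ℝ} (hu : ContDiff ℝ 2 u) (hupos : ∀ x, 0 < u x)
    (hsuper : ∀ x, divergence (flux a u) x ≤ 0) {η : E → ℝ} (hη : ContDiff ℝ 1 η)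
    (hηc : HasCompactSupport η) {R : ℝ} (hηone : Set.EqOn η 1 (closedBall 0 R)) :
    ∫ x in ball 0 R, logEnergy a u x ∂μ ≤ 4 * (Λ * ∫ x, ‖fderiv ℝ η x‖ ^ 2 ∂μ) :=
  calc ∫ x in ball 0 R, logEnergy a u x ∂μ
    _ = ∫ x in ball 0 R, η x ^ 2 * logEnergy a u x ∂μ :=
        setIntegral_congr_fun measurableSet_ball fun x hx => by
          simp [hηone (ball_subset_closedBall hx)]
    _ ≤ ∫ x, η x ^ 2 * logEnergy a u x ∂μ :=
        setIntegral_le_integral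
          (integrable_sq_mul_logEnergy μ ha.continuous (hu.of_le one_le_two)
            (fun x => (hupos x).ne') hη.continuous hηc)
          (.of_forall fun x => mul_nonneg (sq_nonneg _) (logEnergy_nonneg (hapos x)))
    _ ≤ 4 * ∫ x, ⟪flux a η x, ∇ η x⟫ ∂μ :=
        integral_sq_mul_logEnergy_le μ ha hapos hu hupos hsuper hη hηc
    _ ≤ 4 * (Λ * ∫ x, ‖fderiv ℝ η x‖ ^ 2 ∂μ) := by
        gcongr
        exact integral_inner_flux_gradient_le μ ha.continuous hΛ hη hηc

theorem logEnergy_eq_zero_of_finrank_eq_two (hE : finrank ℝ E = 2) (ha : ContDiff ℝ 1 a)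
    (hapos : ∀ x, (a x).IsPositive) (hΛ : ∀ x v, ⟪a x v, v⟫ ≤ Λ * ‖v‖ ^ 2) {u : E → ℝ}
    (hu : ContDiff ℝ 2 u) (hupos : ∀ x, 0 < u x)
    (hsuper : ∀ x, divergence (flux a u) x ≤ 0) (x : E) : logEnergy a u x = 0 := by
  borelize E
  let μ : Measure E := Measure.addHaar
  have hu1 : ContDiff ℝ 1 u := hu.of_le one_le_two
  have hu0 : ∀ x, u x ≠ 0 := fun x => (hupos x).ne'
  refine eq_zero_of_forall_setIntegral_ball_nonpos μ (continuous_logEnergy ha.continuous hu1 hu0)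
    (fun x => logEnergy_nonneg (hapos x)) (fun R => le_of_forall_pos_le_add fun ε hε => ?_) x
  obtain ⟨η, hη, hηc, hηone, henergy⟩ :=
    exists_cutoff_integral_norm_fderiv_pow_finrank_le μ hE.ge R
      (ε := ε / (4 * (|Λ| + 1))) (by positivity)
  rw [hE] at henergy
  calc ∫ x in ball 0 R, logEnergy a u x ∂μ
    _ ≤ 4 * (Λ * ∫ x, ‖fderiv ℝ η x‖ ^ 2 ∂μ) :=
        setIntegral_ball_logEnergy_le μ ha hapos hΛ hu hupos hsuper (hη.of_le (by simp)) hηc hηone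
    _ ≤ 4 * ((|Λ| + 1) * (ε / (4 * (|Λ| + 1)))) := by
        gcongr
        exact (le_abs_self Λ).trans (le_add_of_nonneg_right zero_le_one)
    _ = 0 + ε := by field_simp; ring

theorem liouville_supersolution_divergence_form_plane_general (hE : finrank ℝ E = 2)
    (ha : ContDiff ℝ 1 a) (hasymm : ∀ x, (a x).IsSymmetric)
    (hapos : ∀ x v, v ≠ 0 → 0 < ⟪a x v, v⟫) (hΛ : ∀ x v, ⟪a x v, v⟫ ≤ Λ * ‖v‖ ^ 2)
    {w : E → ℝ} (hw : ContDiff ℝ 2 w) (hwbdd : BddBelow (Set.range w))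
    (hsuper : ∀ x, divergence (flux a w) x ≤ 0) : ∃ c : ℝ, ∀ x, w x = c := by
  obtain ⟨m, hm⟩ := hwbdd
  let u : E → ℝ := fun x => w x + (1 - m)
  have hu : ContDiff ℝ 2 u := hw.add contDiff_const
  have hupos (x : E) : 0 < u x := by linarith [hm (Set.mem_range_self x)]
  have hgrad : ∇ u = ∇ w := funext fun x => by simp only [gradient, u, fderiv_add_const]
  have hflux : flux a u = flux a w := by unfold flux; rw [hgrad]
  have hpos (x : E) : (a x).IsPositive :=
    (a x).isPositive_iff.2 ⟨hasymm x, fun v => by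
      rcases eq_or_ne v 0 with rfl | hv
      · simp
      · exact (hapos x v hv).le⟩
  have hgradzero (x : E) : ∇ w x = 0 := by
    have henergy : logEnergy a u x = 0 :=
      logEnergy_eq_zero_of_finrank_eq_two hE ha hpos hΛ hu hupos (hflux ▸ hsuper) x
    rw [logEnergy, hflux, hgrad, div_eq_zero_iff, or_iff_left (pow_pos (hupos x) 2).ne'] at henergy
    by_contra hne
    exact (hapos x _ hne).ne' henergy
  have hfderiv (x : E) : fderiv ℝ w x = 0 := by
    rw [← norm_eq_zero, ← norm_gradient, hgradzero, norm_zero]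
  exact ⟨w 0, fun x => is_const_of_fderiv_eq_zero (hw.differentiable two_ne_zero) hfderiv x 0⟩

end Liouville

section Matrix

variable {ι : Type*} [Fintype ι] [DecidableEq ι]

theorem inner_toEuclideanCLM_self (A : Matrix ι ι ℝ) (v : EuclideanSpace ℝ ι) :
    ⟪Matrix.toEuclideanCLM (𝕜 := ℝ) A v, v⟫ = ∑ i, ∑ j, A i j * v i * v j := by
  rw [real_inner_comm, Matrix.inner_toEuclideanCLM]
  simp only [dotProduct, Matrix.mulVec, Finset.mul_sum, mul_left_comm, mul_assoc]

theorem inner_toEuclideanCLM_self_mem_Icc {A : Matrix ι ι ℝ} {c C : ℝ}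
    (hA : ∀ ξ : ι → ℝ, c * ∑ i, ξ i ^ 2 ≤ ∑ i, ∑ j, A i j * ξ i * ξ j ∧
      ∑ i, ∑ j, A i j * ξ i * ξ j ≤ C * ∑ i, ξ i ^ 2) (v : EuclideanSpace ℝ ι) :
    ⟪Matrix.toEuclideanCLM (𝕜 := ℝ) A v, v⟫ ∈ Set.Icc (c * ‖v‖ ^ 2) (C * ‖v‖ ^ 2) := by
  rw [inner_toEuclideanCLM_self, EuclideanSpace.real_norm_sq_eq]
  exact hA v

theorem contDiff_toEuclideanCLM {E : Type*} [NormedAddCommGroup E] [NormedSpace ℝ E]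
    {A : E → Matrix ι ι ℝ} {n : WithTop ℕ∞} (hA : ∀ i j, ContDiff ℝ n fun x => A x i j) :
    ContDiff ℝ n fun x => Matrix.toEuclideanCLM (𝕜 := ℝ) (A x) := by
  refine contDiff_clm_apply_iff.2 fun v => contDiff_euclidean.2 fun i => ?_
  simp only [Matrix.ofLp_toEuclideanCLM, Matrix.mulVec, dotProduct]
  fun_prop

theorem isSymmetric_toEuclideanCLM {A : Matrix ι ι ℝ} (hA : A.IsSymm) :
    (Matrix.toEuclideanCLM (𝕜 := ℝ) A).IsSymmetric :=
  Matrix.isSymmetric_toEuclideanLin_iff.2 <| A.conjTranspose_eq_transpose_of_trivial.trans hA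

theorem gradient_apply_eq_fderiv_single (w : EuclideanSpace ℝ ι → ℝ) (x : EuclideanSpace ℝ ι)
    (i : ι) :
    ∇ w x i = fderiv ℝ w x (EuclideanSpace.single i 1) := by
  rw [← inner_gradient_left, EuclideanSpace.inner_single_right]
  simp

theorem divergence_flux_toEuclideanCLM {A : EuclideanSpace ℝ ι → Matrix ι ι ℝ}
    {w : EuclideanSpace ℝ ι → ℝ} (hA : ∀ i j, ContDiff ℝ 1 fun x => A x i j)
    (hw : ContDiff ℝ 2 w) (x : EuclideanSpace ℝ ι) :
    divergence (flux (fun y => Matrix.toEuclideanCLM (𝕜 := ℝ) (A y)) w) x =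
      ∑ i, fderiv ℝ (fun y => ∑ j, A y i j * fderiv ℝ w y (EuclideanSpace.single j 1)) x
        (EuclideanSpace.single i 1) := by
  have hflux := contDiff_flux (contDiff_toEuclideanCLM hA) (by rwa [one_add_one_eq_two])
  rw [divergence_eq_sum_fderiv_apply_single (hflux.differentiable one_ne_zero x)]
  simp [flux, Matrix.mulVec, dotProduct, gradient_apply_eq_fderiv_single]

end Matrix

end

/-- Liouville theorem for nonnegative supersolutions of divergence-form uniformly
elliptic equations in the plane: such functions are constant. -/
theorem liouville_supersolution_divergence_form_plane (lam : ℝ)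
    (hlam : lam ∈ Set.Ioc (0 : ℝ) 1)
    (A : EuclideanSpace ℝ (Fin 2) → Matrix (Fin 2) (Fin 2) ℝ)
    (hAsmooth : ∀ i j, ContDiff ℝ (⊤ : ℕ∞) (fun x => A x i j))
    (hAsym : ∀ x, (A x).IsSymm)
    (hAelliptic : ∀ x (ξ : Fin 2 → ℝ),
      lam * (∑ i, ξ i ^ 2) ≤ ∑ i, ∑ j, A x i j * ξ i * ξ j ∧
      ∑ i, ∑ j, A x i j * ξ i * ξ j ≤ lam⁻¹ * (∑ i, ξ i ^ 2))
    (w : EuclideanSpace ℝ (Fin 2) → ℝ)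
    (hw : ContDiff ℝ (⊤ : ℕ∞) w)
    (hwpos : ∀ x, 0 ≤ w x)
    (hsuper : ∀ x, ∑ i, fderiv ℝ
        (fun y => ∑ j, A y i j * fderiv ℝ w y (EuclideanSpace.single j 1)) x
        (EuclideanSpace.single i 1) ≤ 0) :
    ∃ c : ℝ, ∀ x, w x = c := by
  have hA (i j : Fin 2) : ContDiff ℝ 1 fun x => A x i j := (hAsmooth i j).of_le (by simp)
  have hw2 : ContDiff ℝ 2 w := contDiff_infty.1 hw 2
  have helliptic (x v) := inner_toEuclideanCLM_self_mem_Icc (hAelliptic x) v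
  exact liouville_supersolution_divergence_form_plane_general finrank_euclideanSpace_fin
    (contDiff_toEuclideanCLM hA) (fun x => isSymmetric_toEuclideanCLM (hAsym x))
    (fun x v hv => (mul_pos hlam.1 (pow_pos (norm_pos_iff.2 hv) 2)).trans_le (helliptic x v).1)
    (fun x v => (helliptic x v).2) hw2 ⟨0, Set.forall_mem_range.2 hwpos⟩
    fun x => (divergence_flux_toEuclideanCLM hA hw2 x).trans_le (hsuper x)
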